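/- For all s > 0 and c > 0, the large-n limit of E[h_{n/2}²(‖x_n + √s Z‖ c√n / s)], where x_n = (c√n, 0, …, 0) ∈ ℝⁿ and Z ~ N(0, I_n), equals c²(c² + s)/((s/2 + sqrt(s²/4 + c²(c² + s)))². -/

import Mathlib

open MeasureTheory ProbabilityTheory Filter

/-- Modified Bessel function of the first kind of order `ν`. -/
noncomputable def besselI (ν x : ℝ) : ℝ :=
  ∑' k : ℕ, (x / 2) ^ (2 * (k : ℝ) + ν) / (k.factorial * Real.Gamma ((k : ℝ) + ν + 1))

/-- Ratio `h_ν(x) = I_ν(x) / I_{ν-1}(x)`. -/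
noncomputable def besselRatio (ν x : ℝ) : ℝ := besselI ν x / besselI (ν - 1) x

/-- Standard Gaussian measure on `ℝⁿ`. -/
noncomputable def stdGaussian (n : ℕ) : Measure (Fin n → ℝ) :=
  Measure.pi fun _ => gaussianReal 0 1

/-- Euclidean norm on `Fin n → ℝ`. -/
noncomputable def euclNorm {n : ℕ} (z : Fin n → ℝ) : ℝ := Real.sqrt (∑ i, z i ^ 2)

/-- The vector `(c√n, 0, …, 0) ∈ ℝⁿ`. -/
noncomputable def xVec (n : ℕ) (c : ℝ) : Fin n → ℝ :=
  fun i => if (i : ℕ) = 0 then c * Real.sqrt n else 0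

/-!
The continued fraction recurrence `h_ν(x) (2ν / x + h_{ν+1}(x)) = 1` forces
`-2 / x ≤ h_{ν+1}(x) - h_ν(x) ≤ 0`, so that `h_ν²` stays within `1 / ν` of `f_ν²`, where
`f_ν(x) = x / (ν + √(ν² + x²))` solves the recurrence with `h_{ν+1}` replaced by `h_ν`. The function
`f_ν(x)` is homogeneous of degree `0` in `(ν, x)`, and `f_ν²` is Lipschitz in `x²`. A variance bound
shows that `‖x_n + √s Z‖² / n` converges to `c² + s` in `L¹`, so the expectation tends to
`f_{s/2}(c √(c² + s))²`, with an error of order `1 / √n`.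
-/

section BesselSeries

/-- The `k`-th term of the power series defining `besselI ν x`. -/
noncomputable def besselITerm (ν x : ℝ) (k : ℕ) : ℝ :=
  (x / 2) ^ (2 * (k : ℝ) + ν) / (k.factorial * Real.Gamma ((k : ℝ) + ν + 1))

variable {ν x : ℝ}

lemma besselITerm_pos (hν : -1 < ν) (hx : 0 < x) (k : ℕ) : 0 < besselITerm ν x k := by
  have hΓ : 0 < Real.Gamma ((k : ℝ) + ν + 1) :=
    Real.Gamma_pos_of_pos (by linarith [k.cast_nonneg (α := ℝ)])
  unfold besselITerm
  positivity

lemma besselITerm_zero_right (hν : 0 < ν) (k : ℕ) : besselITerm ν 0 k = 0 := by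
  have hexp : 2 * (k : ℝ) + ν ≠ 0 := by positivity
  simp [besselITerm, Real.zero_rpow hexp]

lemma besselITerm_sub_one (ν : ℝ) (hx : 0 < x) (k : ℕ) :
    besselITerm (ν - 1) x k = 2 / x * (k + ν) * besselITerm ν x k := by
  have hpow : (x / 2) ^ (2 * (k : ℝ) + ν) = (x / 2) ^ (2 * (k : ℝ) + (ν - 1)) * (x / 2) := by
    rw [← Real.rpow_add_one (by positivity)]
    ring_nf
  unfold besselITerm
  rw [hpow, show (k : ℝ) + (ν - 1) + 1 = k + ν by ring]
  rcases eq_or_ne ((k : ℝ) + ν) 0 with h | h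
  · simp [h]
  · rw [Real.Gamma_add_one h]
    field_simp

lemma besselITerm_add_one (ν : ℝ) (hx : 0 < x) (k : ℕ) :
    besselITerm (ν + 1) x k = 2 / x * (k + 1 : ℕ) * besselITerm ν x (k + 1) := by
  have hpow : (x / 2) ^ (2 * ((k + 1 : ℕ) : ℝ) + ν)
      = (x / 2) ^ (2 * (k : ℝ) + (ν + 1)) * (x / 2) := by
    rw [← Real.rpow_add_one (by positivity)]
    push_cast
    ring_nf
  unfold besselITerm
  rw [hpow, show ((k + 1 : ℕ) : ℝ) + ν + 1 = k + (ν + 1) + 1 by push_cast; ring,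
    Nat.factorial_succ]
  push_cast
  field_simp

lemma besselITerm_succ (hx : 0 < x) {k : ℕ} (hk : (k : ℝ) + ν + 1 ≠ 0) :
    besselITerm ν x (k + 1) = (x / 2) ^ 2 / ((k + 1) * (k + ν + 1)) * besselITerm ν x k := by
  have hadd := besselITerm_add_one ν hx k
  have hsub := besselITerm_sub_one (ν + 1) hx k
  rw [add_sub_cancel_right, hadd] at hsub
  rw [hsub, ← add_assoc]
  push_cast
  field_simp

lemma summable_besselITerm (ν : ℝ) (hx : 0 < x) : Summable (besselITerm ν x) := by
  have hν : ∀ᶠ k : ℕ in atTop, 1 - ν ≤ (k : ℝ) + 1 ∧ 2 * (x / 2) ^ 2 ≤ (k : ℝ) + 1 := by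
    have hk : Tendsto (fun k : ℕ => (k : ℝ) + 1) atTop atTop :=
      tendsto_atTop_add_const_right _ _ tendsto_natCast_atTop_atTop
    exact (hk.eventually_ge_atTop _).and (hk.eventually_ge_atTop _)
  refine summable_of_ratio_norm_eventually_le (r := 1 / 2) (by norm_num) ?_
  filter_upwards [hν] with k ⟨hkν, hkx⟩
  have hden : (k : ℝ) + 1 ≤ (k + 1) * (k + ν + 1) :=
    le_mul_of_one_le_right (by positivity) (by linarith)
  have hpos : 0 < ((k : ℝ) + 1) * (k + ν + 1) := by linarith [k.cast_nonneg (α := ℝ)]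
  rw [besselITerm_succ hx (by linarith), norm_mul, Real.norm_of_nonneg (by positivity)]
  refine mul_le_mul_of_nonneg_right ?_ (norm_nonneg _)
  rw [div_le_div_iff₀ hpos two_pos]
  linarith

lemma besselI_pos (hν : -1 < ν) (hx : 0 < x) : 0 < besselI ν x :=
  (summable_besselITerm ν hx).tsum_pos (fun k => (besselITerm_pos hν hx k).le) 0
    (besselITerm_pos hν hx 0)

lemma besselI_zero_right (hν : 0 < ν) : besselI ν 0 = 0 :=
  (tsum_congr (besselITerm_zero_right hν)).trans tsum_zero

lemma besselI_sub_one (ν : ℝ) (hx : 0 < x) :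
    besselI (ν - 1) x = 2 * ν / x * besselI ν x + besselI (ν + 1) x := by
  have hν : HasSum (fun k => 2 * ν / x * besselITerm ν x k) (2 * ν / x * besselI ν x) :=
    (summable_besselITerm ν hx).hasSum.mul_left _
  have hshift : HasSum (fun k : ℕ => 2 / x * k * besselITerm ν x k) (besselI (ν + 1) x) := by
    have hsum : HasSum (besselITerm (ν + 1) x) (besselI (ν + 1) x) :=
      (summable_besselITerm (ν + 1) hx).hasSum
    rw [funext (besselITerm_add_one ν hx)] at hsum
    rw [← hasSum_nat_add_iff' 1]
    simpa using hsum
  have hterm : ∀ k : ℕ, 2 * ν / x * besselITerm ν x k + 2 / x * k * besselITerm ν x k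
      = besselITerm (ν - 1) x k := fun k => by
    rw [besselITerm_sub_one ν hx]
    ring
  exact (tsum_congr fun k => (hterm k).symm).trans (hν.add hshift).tsum_eq

@[fun_prop]
lemma measurable_besselI (ν : ℝ) : Measurable (besselI ν) := by
  unfold besselI
  fun_prop

end BesselSeries

section BesselRatio

variable {ν x : ℝ}

@[fun_prop]
lemma measurable_besselRatio (ν : ℝ) : Measurable (besselRatio ν) := by
  unfold besselRatio
  fun_prop

lemma besselRatio_pos (hν : 0 < ν) (hx : 0 < x) : 0 < besselRatio ν x :=
  div_pos (besselI_pos (by linarith) hx) (besselI_pos (by linarith) hx)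

-- For `ν ≠ 1` this is the junk value `0 / 0 = 0`, which agrees with the limit at `0`.
lemma besselRatio_zero_right (hν : 0 < ν) : besselRatio ν 0 = 0 := by
  rw [besselRatio, besselI_zero_right hν, zero_div]

lemma besselRatio_mul_add_besselRatio (hν : 0 < ν) (hx : 0 < x) :
    besselRatio ν x * (2 * ν / x + besselRatio (ν + 1) x) = 1 := by
  have hI : besselI ν x ≠ 0 := (besselI_pos (by linarith) hx).ne'
  have hI' : besselI (ν - 1) x ≠ 0 := (besselI_pos (by linarith) hx).ne'
  have hrec : 2 * ν / x + besselRatio (ν + 1) x = besselI (ν - 1) x / besselI ν x := by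
    rw [besselRatio, add_sub_cancel_right, besselI_sub_one ν hx, add_div,
      mul_div_cancel_right₀ _ hI]
  rw [hrec, besselRatio, div_mul_div_cancel₀ hI', div_self hI]

lemma besselRatio_le_div (hν : 0 < ν) (hx : 0 < x) : besselRatio ν x ≤ x / (2 * ν) := by
  have h := besselRatio_mul_add_besselRatio hν hx
  have hmul := mul_pos (besselRatio_pos hν hx) (besselRatio_pos (add_pos hν one_pos) hx)
  have hle : besselRatio ν x * (2 * ν / x) ≤ 1 := by linarith
  rwa [← le_div_iff₀ (by positivity), one_div_div] at hle

lemma besselRatio_mul_besselRatio_add_one_le_one (hν : 0 < ν) (hx : 0 < x) :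
    besselRatio ν x * besselRatio (ν + 1) x ≤ 1 := by
  have h := besselRatio_mul_add_besselRatio hν hx
  have hmul : 0 < besselRatio ν x * (2 * ν / x) := mul_pos (besselRatio_pos hν hx) (by positivity)
  linarith

lemma besselRatio_add_one_sub (hν : 0 < ν) (hx : 0 < x) :
    besselRatio (ν + 1) x - besselRatio ν x = -(besselRatio ν x * besselRatio (ν + 1) x) *
      (2 / x + (besselRatio (ν + 1 + 1) x - besselRatio (ν + 1) x)) := by
  have h := besselRatio_mul_add_besselRatio hν hx
  have h' := besselRatio_mul_add_besselRatio (add_pos hν one_pos) hx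
  linear_combination besselRatio ν x * h' - besselRatio (ν + 1) x * h

lemma besselRatio_add_one_sub_nonpos (hν : 0 < ν) (hx : 0 < x)
    (h : -(2 / x) ≤ besselRatio (ν + 1 + 1) x - besselRatio (ν + 1) x) :
    besselRatio (ν + 1) x - besselRatio ν x ≤ 0 := by
  rw [besselRatio_add_one_sub hν hx, neg_mul, neg_nonpos]
  exact mul_nonneg (mul_pos (besselRatio_pos hν hx) (besselRatio_pos (by linarith) hx)).le
    (by linarith)

lemma neg_two_div_le_besselRatio_add_one_sub (hν : 0 < ν) (hx : 0 < x)
    (h : besselRatio (ν + 1 + 1) x - besselRatio (ν + 1) x ≤ 0) :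
    -(2 / x) ≤ besselRatio (ν + 1) x - besselRatio ν x := by
  have hmul := mul_pos (besselRatio_pos hν hx) (besselRatio_pos (add_pos hν one_pos) hx)
  rw [besselRatio_add_one_sub hν hx, neg_mul, neg_le_neg_iff]
  calc besselRatio ν x * besselRatio (ν + 1) x *
        (2 / x + (besselRatio (ν + 1 + 1) x - besselRatio (ν + 1) x))
      ≤ besselRatio ν x * besselRatio (ν + 1) x * (2 / x) := by
        gcongr
        linarith
    _ ≤ 1 * (2 / x) := by
        gcongr
        exact besselRatio_mul_besselRatio_add_one_le_one hν hx
    _ = 2 / x := one_mul _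

lemma neg_two_div_le_besselRatio_add_one_sub_of_sq_le (hν : 0 < ν) (hx : 0 < x)
    (hxν : x ^ 2 ≤ 4 * ν) : -(2 / x) ≤ besselRatio (ν + 1) x - besselRatio ν x := by
  have hle : x / (2 * ν) ≤ 2 / x := by
    rw [div_le_div_iff₀ (by positivity) hx]
    linarith
  linarith [besselRatio_le_div hν hx, besselRatio_pos (add_pos hν one_pos) hx]

-- For `x ^ 2 ≤ 4 * ν` the crude bound `besselRatio ν x ≤ x / (2 * ν)` suffices; the continued
-- fraction recurrence then carries the two inequalities down to every `ν > 0`.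
lemma besselRatio_add_one_sub_mem_Icc (hν : 0 < ν) (hx : 0 < x) :
    besselRatio (ν + 1) x - besselRatio ν x ∈ Set.Icc (-(2 / x)) 0 := by
  have descent : ∀ (N : ℕ) (μ : ℝ), 0 < μ → x ^ 2 ≤ 4 * (μ + N) →
      besselRatio (μ + 1) x - besselRatio μ x ∈ Set.Icc (-(2 / x)) 0 := by
    intro N
    induction N with
    | zero =>
      intro μ hμ hxμ
      rw [Nat.cast_zero, add_zero] at hxμ
      exact ⟨neg_two_div_le_besselRatio_add_one_sub_of_sq_le hμ hx hxμ,
        besselRatio_add_one_sub_nonpos hμ hx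
          (neg_two_div_le_besselRatio_add_one_sub_of_sq_le (by linarith) hx (by linarith))⟩
    | succ N ih =>
      intro μ hμ hxμ
      obtain ⟨hlower, hupper⟩ := ih (μ + 1) (by linarith) (by push_cast at hxμ; linarith)
      exact ⟨neg_two_div_le_besselRatio_add_one_sub hμ hx hupper,
        besselRatio_add_one_sub_nonpos hμ hx hlower⟩
  obtain ⟨N, hN⟩ := exists_nat_ge (x ^ 2)
  exact descent N ν hν (by linarith [N.cast_nonneg (α := ℝ)])

end BesselRatio

section AmosRatio

/-- The elementary lower bound `x / (ν + √(ν² + x²))` of Amos for `besselRatio ν x`. -/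
noncomputable def amosRatio (ν x : ℝ) : ℝ := x / (ν + √(ν ^ 2 + x ^ 2))

variable {ν x : ℝ}

lemma amosRatio_pos (hν : 0 < ν) (hx : 0 < x) : 0 < amosRatio ν x := by
  unfold amosRatio
  positivity

lemma amosRatio_mul_add_amosRatio (hν : 0 < ν) (hx : 0 < x) :
    amosRatio ν x * (2 * ν / x + amosRatio ν x) = 1 := by
  have hsq : √(ν ^ 2 + x ^ 2) ^ 2 = ν ^ 2 + x ^ 2 := Real.sq_sqrt (by positivity)
  unfold amosRatio
  field_simp
  linear_combination -hsq

lemma amosRatio_mul_mul {t : ℝ} (ht : 0 < t) (ν x : ℝ) :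
    amosRatio (t * ν) (t * x) = amosRatio ν x := by
  have hsqrt : √((t * ν) ^ 2 + (t * x) ^ 2) = t * √(ν ^ 2 + x ^ 2) := by
    rw [mul_pow, mul_pow, ← mul_add, Real.sqrt_mul (by positivity), Real.sqrt_sq ht.le]
  rw [amosRatio, hsqrt, ← mul_add, mul_div_mul_left _ _ ht.ne', amosRatio]

lemma amosRatio_sq (hν : 0 < ν) (x : ℝ) :
    amosRatio ν x ^ 2 = 1 - 2 * ν / (ν + √(ν ^ 2 + x ^ 2)) := by
  have hsq : √(ν ^ 2 + x ^ 2) ^ 2 = ν ^ 2 + x ^ 2 := Real.sq_sqrt (by positivity)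
  unfold amosRatio
  field_simp
  linear_combination -hsq

lemma abs_amosRatio_sq_sub_le (hν : 0 < ν) (x y : ℝ) :
    |amosRatio ν x ^ 2 - amosRatio ν y ^ 2| ≤ |x ^ 2 - y ^ 2| / (4 * ν ^ 2) := by
  have le_root (t : ℝ) : ν ≤ √(ν ^ 2 + t ^ 2) := Real.le_sqrt_of_sq_le (by linarith [sq_nonneg t])
  have root_sq (t : ℝ) : √(ν ^ 2 + t ^ 2) ^ 2 = ν ^ 2 + t ^ 2 := Real.sq_sqrt (by positivity)
  rw [amosRatio_sq hν, amosRatio_sq hν]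
  have hx := le_root x
  have hy := le_root y
  have hxy : x ^ 2 - y ^ 2 = √(ν ^ 2 + x ^ 2) ^ 2 - √(ν ^ 2 + y ^ 2) ^ 2 := by
    rw [root_sq, root_sq]
    ring
  generalize √(ν ^ 2 + x ^ 2) = a at *
  generalize √(ν ^ 2 + y ^ 2) = b at *
  have ha : 0 < a := hν.trans_le hx
  have hb : 0 < b := hν.trans_le hy
  have hdiff : 1 - 2 * ν / (ν + a) - (1 - 2 * ν / (ν + b))
      = 2 * ν * (x ^ 2 - y ^ 2) / ((ν + a) * (ν + b) * (a + b)) := by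
    rw [hxy]
    field_simp
    ring
  have hden : (ν + ν) * (ν + ν) * (ν + ν) ≤ (ν + a) * (ν + b) * (a + b) := by gcongr
  rw [hdiff, abs_div, abs_mul, abs_of_pos (mul_pos two_pos hν),
    abs_of_pos (by positivity : 0 < (ν + a) * (ν + b) * (a + b))]
  calc 2 * ν * |x ^ 2 - y ^ 2| / ((ν + a) * (ν + b) * (a + b))
      ≤ 2 * ν * |x ^ 2 - y ^ 2| / ((ν + ν) * (ν + ν) * (ν + ν)) := by gcongr
    _ = |x ^ 2 - y ^ 2| / (4 * ν ^ 2) := by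
        field_simp
        ring

lemma amosRatio_le_besselRatio (hν : 0 < ν) (hx : 0 < x) :
    amosRatio ν x ≤ besselRatio ν x := by
  by_contra! hlt
  have hbessel := besselRatio_pos hν hx
  have hmono := (besselRatio_add_one_sub_mem_Icc hν hx).2
  have : (1 : ℝ) < 1 :=
    calc 1 = besselRatio ν x * (2 * ν / x + besselRatio (ν + 1) x) :=
          (besselRatio_mul_add_besselRatio hν hx).symm
      _ ≤ besselRatio ν x * (2 * ν / x + besselRatio ν x) := by
          gcongr
          linarith
      _ < amosRatio ν x * (2 * ν / x + amosRatio ν x) := by gcongr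
      _ = 1 := amosRatio_mul_add_amosRatio hν hx
  exact this.false

lemma besselRatio_sq_le_amosRatio_sq_add (hν : 0 < ν) (hx : 0 < x) :
    besselRatio ν x ^ 2 ≤ amosRatio ν x ^ 2 + 1 / ν := by
  have hbessel := besselRatio_mul_add_besselRatio hν hx
  have hamos := amosRatio_mul_add_amosRatio hν hx
  have hpos := besselRatio_pos hν hx
  have hstep : besselRatio ν x ≤ besselRatio (ν + 1) x + 2 / x := by
    linarith [(besselRatio_add_one_sub_mem_Icc hν hx).1]
  calc besselRatio ν x ^ 2 ≤ besselRatio ν x * (besselRatio (ν + 1) x + 2 / x) := by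
        rw [sq]
        gcongr
    _ = amosRatio ν x ^ 2 - 2 * ν / x * (besselRatio ν x - amosRatio ν x)
          + 2 / x * besselRatio ν x := by linear_combination hbessel - hamos
    _ ≤ amosRatio ν x ^ 2 + 2 / x * (x / (2 * ν)) := by
        have hgap : 0 ≤ 2 * ν / x * (besselRatio ν x - amosRatio ν x) :=
          mul_nonneg (by positivity) (sub_nonneg.2 (amosRatio_le_besselRatio hν hx))
        have hupper : 2 / x * besselRatio ν x ≤ 2 / x * (x / (2 * ν)) := by
          gcongr
          exact besselRatio_le_div hν hx
        linarith
    _ = amosRatio ν x ^ 2 + 1 / ν := by field_simp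

lemma abs_besselRatio_sq_sub_amosRatio_sq_le (hν : 0 < ν) (hx : 0 ≤ x) :
    |besselRatio ν x ^ 2 - amosRatio ν x ^ 2| ≤ 1 / ν := by
  rcases hx.eq_or_lt with rfl | hx
  · simp [besselRatio_zero_right hν, amosRatio, hν.le]
  · have hlower : amosRatio ν x ^ 2 ≤ besselRatio ν x ^ 2 :=
      pow_le_pow_left₀ (amosRatio_pos hν hx).le (amosRatio_le_besselRatio hν hx) 2
    rw [abs_of_nonneg (sub_nonneg.2 hlower)]
    linarith [besselRatio_sq_le_amosRatio_sq_add hν hx]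

end AmosRatio


section Concentration

variable {Ω : Type*} [MeasurableSpace Ω] {P : Measure Ω}

lemma variance_add_le [IsFiniteMeasure P] {X Y : Ω → ℝ} (hX : MemLp X 2 P) (hY : MemLp Y 2 P) :
    Var[X + Y; P] ≤ 2 * Var[X; P] + 2 * Var[Y; P] := by
  have hsub := variance_nonneg (X - Y) P
  rw [variance_sub hX hY] at hsub
  rw [variance_add hX hY]
  linarith

lemma memLp_two_sq {T : Ω → ℝ} (hT : MemLp T 4 P) : MemLp (fun ω => T ω ^ 2) 2 P := by
  have hexp : (4 : ENNReal) / 2 = 2 :=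
    ((ENNReal.eq_div_iff (by simp) (by simp)).2 (by norm_num)).symm
  simpa [hexp] using hT.norm_rpow_div 2

variable [IsProbabilityMeasure P]

lemma integral_abs_sub_integral_le_sqrt_variance {X : Ω → ℝ} (hX : MemLp X 2 P) :
    ∫ ω, |X ω - ∫ ω', X ω' ∂P| ∂P ≤ √Var[X; P] := by
  have hdev : MemLp (fun ω => |X ω - ∫ ω', X ω' ∂P|) 2 P := (hX.sub (memLp_const _)).abs
  have hvar := variance_nonneg (fun ω => |X ω - ∫ ω', X ω' ∂P|) P
  rw [variance_eq_sub hdev] at hvar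
  refine Real.le_sqrt_of_sq_le ?_
  rw [variance_eq_integral hX.aemeasurable]
  simpa [sq_abs] using hvar

variable {T : Ω → ℝ} (a σ : ℝ)

lemma variance_add_mul_sq_le (hT : MemLp T 4 P) :
    Var[fun ω => (a + σ * T ω) ^ 2; P]
      ≤ 8 * σ ^ 2 * a ^ 2 * Var[T; P] + 2 * σ ^ 4 * Var[fun ω => T ω ^ 2; P] := by
  have hlin : MemLp (fun ω => 2 * a * σ * T ω) 2 P :=
    (hT.mono_exponent (by norm_num)).const_mul _
  have hquad : MemLp (fun ω => σ ^ 2 * T ω ^ 2) 2 P := (memLp_two_sq hT).const_mul _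
  have hexpand (ω : Ω) :
      (a + σ * T ω) ^ 2 = a ^ 2 + (2 * a * σ * T ω + σ ^ 2 * T ω ^ 2) := by ring
  calc Var[fun ω => (a + σ * T ω) ^ 2; P]
      = Var[(fun ω => 2 * a * σ * T ω) + fun ω => σ ^ 2 * T ω ^ 2; P] := by
        rw [← variance_const_add (hlin.add hquad).1 (a ^ 2)]
        simp_rw [hexpand, Pi.add_apply]
    _ ≤ _ := variance_add_le hlin hquad
    _ = 8 * σ ^ 2 * a ^ 2 * Var[T; P] + 2 * σ ^ 4 * Var[fun ω => T ω ^ 2; P] := by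
        rw [variance_const_mul, variance_const_mul]
        ring

lemma memLp_add_mul_sq (hT : MemLp T 4 P) : MemLp (fun ω => (a + σ * T ω) ^ 2) 2 P :=
  memLp_two_sq ((memLp_const a).add (hT.const_mul σ))

lemma integral_add_mul_sq (hT : MemLp T 2 P) (hmean : ∫ ω, T ω ∂P = 0) :
    ∫ ω, (a + σ * T ω) ^ 2 ∂P = a ^ 2 + σ ^ 2 * ∫ ω, T ω ^ 2 ∂P := by
  have hlin : Integrable (fun ω => 2 * a * σ * T ω) P := (hT.integrable one_le_two).const_mul _
  have hquad : Integrable (fun ω => σ ^ 2 * T ω ^ 2) P := hT.integrable_sq.const_mul _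
  have hsum : Integrable (fun ω => 2 * a * σ * T ω + σ ^ 2 * T ω ^ 2) P := hlin.add hquad
  have hexpand (ω : Ω) :
      (a + σ * T ω) ^ 2 = a ^ 2 + (2 * a * σ * T ω + σ ^ 2 * T ω ^ 2) := by ring
  simp_rw [hexpand]
  rw [integral_add (integrable_const _) hsum, integral_add hlin hquad,
    integral_const_mul, integral_const_mul, hmean]
  simp

end Concentration

section ConcentrationPi

variable {ι : Type*} [Fintype ι] {μ : Measure ℝ} [IsProbabilityMeasure μ] (a : ι → ℝ) (σ : ℝ)

lemma memLp_sum_add_mul_sq_pi (hμ : MemLp id 4 μ) :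
    MemLp (fun z : ι → ℝ => ∑ i, (a i + σ * z i) ^ 2) 2 (Measure.pi fun _ => μ) :=
  memLp_finsetSum _ fun i _ => (memLp_add_mul_sq (a i) σ hμ).comp_measurePreserving
    (measurePreserving_eval (fun _ => μ) i)

lemma variance_sum_add_mul_sq_pi_le (hμ : MemLp id 4 μ) :
    Var[fun z : ι → ℝ => ∑ i, (a i + σ * z i) ^ 2; Measure.pi fun _ => μ]
      ≤ 8 * σ ^ 2 * (∑ i, a i ^ 2) * Var[id; μ]
        + Fintype.card ι * (2 * σ ^ 4 * Var[fun t => t ^ 2; μ]) := by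
  calc Var[fun z : ι → ℝ => ∑ i, (a i + σ * z i) ^ 2; Measure.pi fun _ => μ]
      = ∑ i, Var[fun t => (a i + σ * id t) ^ 2; μ] := by
        rw [← variance_sum_pi fun i => memLp_add_mul_sq (a i) σ hμ]
        congr 1
        ext z
        rw [Finset.sum_apply]
        rfl
    _ ≤ ∑ i, (8 * σ ^ 2 * a i ^ 2 * Var[id; μ] + 2 * σ ^ 4 * Var[fun t => t ^ 2; μ]) :=
        Finset.sum_le_sum fun i _ => variance_add_mul_sq_le (a i) σ hμ
    _ = _ := by
        rw [Finset.sum_add_distrib, ← Finset.sum_mul, ← Finset.mul_sum, Finset.sum_const,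
          Finset.card_univ, nsmul_eq_mul]

lemma integral_sum_add_mul_sq_pi (hμ : MemLp id 2 μ) (hmean : ∫ t, t ∂μ = 0) :
    ∫ z : ι → ℝ, ∑ i, (a i + σ * z i) ^ 2 ∂(Measure.pi fun _ => μ)
      = ∑ i, a i ^ 2 + Fintype.card ι * (σ ^ 2 * ∫ t, t ^ 2 ∂μ) := by
  have hint (i : ι) : Integrable (fun t => (a i + σ * t) ^ 2) μ :=
    ((memLp_const (a i)).add (hμ.const_mul σ)).integrable_sq
  calc ∫ z : ι → ℝ, ∑ i, (a i + σ * z i) ^ 2 ∂(Measure.pi fun _ => μ)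
      = ∑ i, ∫ z : ι → ℝ, (a i + σ * z i) ^ 2 ∂(Measure.pi fun _ => μ) :=
        integral_finsetSum _ fun i _ => integrable_comp_eval (μ := fun _ : ι => μ) (hint i)
    _ = ∑ i, ∫ t, (a i + σ * t) ^ 2 ∂μ :=
        Finset.sum_congr rfl fun i _ => integral_comp_eval (μ := fun _ : ι => μ) (hint i).1
    _ = ∑ i, (a i ^ 2 + σ ^ 2 * ∫ t, t ^ 2 ∂μ) :=
        Finset.sum_congr rfl fun i _ => integral_add_mul_sq (a i) σ hμ hmean
    _ = _ := by rw [Finset.sum_add_distrib, Finset.sum_const, Finset.card_univ, nsmul_eq_mul]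

end ConcentrationPi

section Comparison

variable {Ω : Type*} [MeasurableSpace Ω] {P : Measure Ω} [IsProbabilityMeasure P]

lemma abs_integral_besselRatio_sq_sub_amosRatio_sq_le {ν : ℝ} (hν : 0 < ν) {X : Ω → ℝ}
    (hX : Measurable X) (hX0 : ∀ ω, 0 ≤ X ω) (hX2 : Integrable (fun ω => X ω ^ 2) P) (x₀ : ℝ) :
    |∫ ω, besselRatio ν (X ω) ^ 2 ∂P - amosRatio ν x₀ ^ 2|
      ≤ 1 / ν + (∫ ω, |X ω ^ 2 - x₀ ^ 2| ∂P) / (4 * ν ^ 2) := by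
  have hpointwise (ω : Ω) : |besselRatio ν (X ω) ^ 2 - amosRatio ν x₀ ^ 2|
      ≤ 1 / ν + |X ω ^ 2 - x₀ ^ 2| / (4 * ν ^ 2) :=
    (abs_sub_le _ (amosRatio ν (X ω) ^ 2) _).trans
      (add_le_add (abs_besselRatio_sq_sub_amosRatio_sq_le hν (hX0 ω))
        (abs_amosRatio_sq_sub_le hν _ _))
  have hdev : Integrable (fun ω => |X ω ^ 2 - x₀ ^ 2| / (4 * ν ^ 2)) P :=
    (hX2.sub (integrable_const _)).abs.div_const _
  have hbound : Integrable (fun ω => 1 / ν + |X ω ^ 2 - x₀ ^ 2| / (4 * ν ^ 2)) P :=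
    (integrable_const _).add hdev
  have hmeas : Measurable fun ω => besselRatio ν (X ω) ^ 2 := by fun_prop
  have hdiff : Integrable (fun ω => besselRatio ν (X ω) ^ 2 - amosRatio ν x₀ ^ 2) P :=
    hbound.mono' (hmeas.sub_const _).aestronglyMeasurable (.of_forall hpointwise)
  have hratio : Integrable (fun ω => besselRatio ν (X ω) ^ 2) P := by
    refine (hdiff.add (integrable_const (amosRatio ν x₀ ^ 2))).congr (.of_forall fun ω => ?_)
    exact sub_add_cancel _ _
  calc |∫ ω, besselRatio ν (X ω) ^ 2 ∂P - amosRatio ν x₀ ^ 2|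
      = |∫ ω, (besselRatio ν (X ω) ^ 2 - amosRatio ν x₀ ^ 2) ∂P| := by
        rw [integral_sub hratio (integrable_const _), integral_const, probReal_univ, one_smul]
    _ ≤ ∫ ω, |besselRatio ν (X ω) ^ 2 - amosRatio ν x₀ ^ 2| ∂P := abs_integral_le_integral_abs
    _ ≤ ∫ ω, (1 / ν + |X ω ^ 2 - x₀ ^ 2| / (4 * ν ^ 2)) ∂P :=
        integral_mono hdiff.abs hbound hpointwise
    _ = 1 / ν + (∫ ω, |X ω ^ 2 - x₀ ^ 2| ∂P) / (4 * ν ^ 2) := by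
        rw [integral_add (integrable_const _) hdev, integral_const, probReal_univ, one_smul,
          integral_div]

end Comparison

section Gaussian

instance isProbabilityMeasure_stdGaussian (n : ℕ) : IsProbabilityMeasure (stdGaussian n) := by
  unfold _root_.stdGaussian
  infer_instance

lemma memLp_four_gaussianReal (m : ℝ) (v : NNReal) : MemLp id 4 (gaussianReal m v) :=
  memLp_id_gaussianReal 4

lemma integral_sq_gaussianReal (v : NNReal) : ∫ t, t ^ 2 ∂(gaussianReal 0 v) = v := by
  have hvar : Var[id; gaussianReal 0 v] = v := variance_id_gaussianReal
  rw [variance_of_integral_eq_zero aemeasurable_id integral_id_gaussianReal] at hvar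
  exact hvar

@[fun_prop]
lemma measurable_euclNorm {n : ℕ} : Measurable (euclNorm : (Fin n → ℝ) → ℝ) := by
  unfold euclNorm
  fun_prop

lemma euclNorm_sq {n : ℕ} (z : Fin n → ℝ) : euclNorm z ^ 2 = ∑ i, z i ^ 2 :=
  Real.sq_sqrt (by positivity)

lemma euclNorm_xVec_sq (n : ℕ) (c : ℝ) : euclNorm (xVec n c) ^ 2 = c ^ 2 * n := by
  cases n with
  | zero => simp [euclNorm_sq]
  | succ m =>
    have hsqrt : √((m : ℝ) + 1) ^ 2 = m + 1 := Real.sq_sqrt (by positivity)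
    simp [euclNorm_sq, xVec, mul_pow, hsqrt]

variable {n : ℕ} (a : Fin n → ℝ) (σ : ℝ)

lemma memLp_euclNorm_add_mul_sq :
    MemLp (fun z : Fin n → ℝ => euclNorm (fun i => a i + σ * z i) ^ 2) 2 (stdGaussian n) := by
  simp_rw [euclNorm_sq]
  exact memLp_sum_add_mul_sq_pi a σ (memLp_four_gaussianReal 0 1)

lemma integral_euclNorm_add_mul_sq :
    ∫ z, euclNorm (fun i => a i + σ * z i) ^ 2 ∂(stdGaussian n)
      = euclNorm a ^ 2 + n * σ ^ 2 := by
  simp_rw [euclNorm_sq]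
  simpa [_root_.stdGaussian, integral_sq_gaussianReal] using
    integral_sum_add_mul_sq_pi a σ (memLp_id_gaussianReal (μ := 0) (v := 1) 2)
      integral_id_gaussianReal

lemma variance_euclNorm_add_mul_sq_le :
    Var[fun z => euclNorm (fun i => a i + σ * z i) ^ 2; stdGaussian n]
      ≤ 8 * σ ^ 2 * euclNorm a ^ 2
        + n * (2 * σ ^ 4 * Var[fun t => t ^ 2; gaussianReal 0 1]) := by
  simp_rw [euclNorm_sq]
  simpa [_root_.stdGaussian, variance_id_gaussianReal] using
    variance_sum_add_mul_sq_pi_le a σ (memLp_four_gaussianReal 0 1)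

lemma integral_abs_euclNorm_add_mul_sq_sub_le :
    ∫ z, |euclNorm (fun i => a i + σ * z i) ^ 2 - (euclNorm a ^ 2 + n * σ ^ 2)| ∂(stdGaussian n)
      ≤ √(8 * σ ^ 2 * euclNorm a ^ 2
        + n * (2 * σ ^ 4 * Var[fun t => t ^ 2; gaussianReal 0 1])) := by
  rw [← integral_euclNorm_add_mul_sq a σ]
  exact (integral_abs_sub_integral_le_sqrt_variance (memLp_euclNorm_add_mul_sq a σ)).trans
    (Real.sqrt_le_sqrt (variance_euclNorm_add_mul_sq_le a σ))

end Gaussian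

section Limit

/-- The argument `‖x_n + √s z‖ c√n / s` at which the theorem evaluates `h_{n/2}`. -/
noncomputable def shiftedArg {n : ℕ} (s c : ℝ) (z : Fin n → ℝ) : ℝ :=
  euclNorm (fun i => xVec n c i + √s * z i) * (c * √n) / s

variable {s c : ℝ} {n : ℕ}

lemma shiftedArg_nonneg (hs : 0 ≤ s) (hc : 0 ≤ c) (z : Fin n → ℝ) : 0 ≤ shiftedArg s c z :=
  div_nonneg (mul_nonneg (Real.sqrt_nonneg _) (by positivity)) hs

lemma shiftedArg_sq (s c : ℝ) (z : Fin n → ℝ) :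
    shiftedArg s c z ^ 2
      = c ^ 2 * n / s ^ 2 * euclNorm (fun i => xVec n c i + √s * z i) ^ 2 := by
  rw [shiftedArg, div_pow, mul_pow, mul_pow, Real.sq_sqrt n.cast_nonneg]
  ring

lemma measurable_shiftedArg (s c : ℝ) : Measurable (shiftedArg s c : (Fin n → ℝ) → ℝ) := by
  unfold shiftedArg
  fun_prop

lemma integrable_shiftedArg_sq (s c : ℝ) :
    Integrable (fun z : Fin n → ℝ => shiftedArg s c z ^ 2) (stdGaussian n) := by
  simp_rw [shiftedArg_sq]
  exact ((memLp_euclNorm_add_mul_sq _ _).integrable one_le_two).const_mul _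

lemma integral_abs_euclNorm_xVec_add_mul_sq_sub_le (hs : 0 ≤ s) (c : ℝ) :
    ∫ z, |euclNorm (fun i => xVec n c i + √s * z i) ^ 2 - n * (c ^ 2 + s)| ∂(stdGaussian n)
      ≤ √(n * (8 * s * c ^ 2 + 2 * s ^ 2 * Var[fun t => t ^ 2; gaussianReal 0 1])) := by
  have hsq : √s ^ 2 = s := Real.sq_sqrt hs
  have hpow4 : √s ^ 4 = s ^ 2 := by rw [pow_mul (√s) 2 2, hsq]
  have hmean : euclNorm (xVec n c) ^ 2 + n * √s ^ 2 = n * (c ^ 2 + s) := by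
    rw [euclNorm_xVec_sq, hsq]
    ring
  rw [← hmean]
  refine (integral_abs_euclNorm_add_mul_sq_sub_le (xVec n c) √s).trans_eq ?_
  rw [euclNorm_xVec_sq, hsq, hpow4]
  ring_nf

lemma integral_abs_shiftedArg_sq_sub_le (hs : 0 < s) (c : ℝ) :
    ∫ z, |shiftedArg s c z ^ 2 - (n / s * (c * √(c ^ 2 + s))) ^ 2| ∂(stdGaussian n)
      ≤ c ^ 2 * n / s ^ 2 *
        √(n * (8 * s * c ^ 2 + 2 * s ^ 2 * Var[fun t => t ^ 2; gaussianReal 0 1])) := by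
  have hcenter : (n / s * (c * √(c ^ 2 + s))) ^ 2
      = c ^ 2 * n / s ^ 2 * (n * (c ^ 2 + s)) := by
    rw [mul_pow, mul_pow, Real.sq_sqrt (by positivity)]
    ring
  have hfactor : 0 ≤ c ^ 2 * n / s ^ 2 := by positivity
  simp_rw [hcenter, shiftedArg_sq, ← mul_sub, abs_mul, abs_of_nonneg hfactor]
  rw [integral_const_mul]
  gcongr
  exact integral_abs_euclNorm_xVec_add_mul_sq_sub_le hs.le c

lemma abs_integral_besselRatio_shiftedArg_sq_sub_le (hs : 0 < s) (hc : 0 ≤ c) (hn : n ≠ 0) :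
    |∫ z, besselRatio ((n : ℝ) / 2) (shiftedArg s c z) ^ 2 ∂(stdGaussian n)
        - amosRatio (s / 2) (c * √(c ^ 2 + s)) ^ 2|
      ≤ 2 / n + c ^ 2 / s ^ 2 *
        √((8 * s * c ^ 2 + 2 * s ^ 2 * Var[fun t => t ^ 2; gaussianReal 0 1]) / n) := by
  have hn0 : (0 : ℝ) < n := by positivity
  set K := 8 * s * c ^ 2 + 2 * s ^ 2 * Var[fun t => t ^ 2; gaussianReal 0 1]
  have hscale : amosRatio (s / 2) (c * √(c ^ 2 + s))
      = amosRatio (n / 2) (n / s * (c * √(c ^ 2 + s))) := by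
    rw [← amosRatio_mul_mul (div_pos hn0 hs), div_mul_div_cancel₀ hs.ne']
  have hroot : √(n * K) = n * √(K / n) := by
    rw [show n * K = (n : ℝ) ^ 2 * (K / n) by field_simp, Real.sqrt_mul (sq_nonneg _),
      Real.sqrt_sq hn0.le]
  calc |∫ z, besselRatio ((n : ℝ) / 2) (shiftedArg s c z) ^ 2 ∂(stdGaussian n)
        - amosRatio (s / 2) (c * √(c ^ 2 + s)) ^ 2|
      ≤ 1 / ((n : ℝ) / 2)
        + (∫ z, |shiftedArg s c z ^ 2 - (n / s * (c * √(c ^ 2 + s))) ^ 2| ∂(stdGaussian n))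
          / (4 * ((n : ℝ) / 2) ^ 2) := by
        rw [hscale]
        exact abs_integral_besselRatio_sq_sub_amosRatio_sq_le (by positivity)
          (measurable_shiftedArg s c) (shiftedArg_nonneg hs.le hc) (integrable_shiftedArg_sq s c) _
    _ ≤ 1 / ((n : ℝ) / 2) + (c ^ 2 * n / s ^ 2 * √(n * K)) / (4 * ((n : ℝ) / 2) ^ 2) := by
        gcongr
        exact integral_abs_shiftedArg_sq_sub_le hs c
    _ = 2 / n + c ^ 2 / s ^ 2 * √(K / n) := by
        rw [hroot]
        field_simp
        ring

lemma amosRatio_half_sq (hs : 0 ≤ s) (c : ℝ) :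
    amosRatio (s / 2) (c * √(c ^ 2 + s)) ^ 2
      = c ^ 2 * (c ^ 2 + s) / (s / 2 + √(s ^ 2 / 4 + c ^ 2 * (c ^ 2 + s))) ^ 2 := by
  have hsq : (c * √(c ^ 2 + s)) ^ 2 = c ^ 2 * (c ^ 2 + s) := by
    rw [mul_pow, Real.sq_sqrt (by positivity)]
  rw [amosRatio, div_pow, hsq, div_pow]
  norm_num

end Limit

theorem limit_h_sq_shifted (s c : ℝ) (hs : 0 < s) (hc : 0 < c) :
    Tendsto (fun n : ℕ =>
        ∫ z, (besselRatio ((n : ℝ) / 2)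
            (euclNorm (fun i => xVec n c i + Real.sqrt s * z i) * (c * Real.sqrt n) / s)) ^ 2
          ∂(stdGaussian n))
      atTop
      (nhds (c ^ 2 * (c ^ 2 + s) /
        (s / 2 + Real.sqrt (s ^ 2 / 4 + c ^ 2 * (c ^ 2 + s))) ^ 2)) := by
  have hrate : Tendsto (fun n : ℕ => 2 / (n : ℝ) + c ^ 2 / s ^ 2 *
      √((8 * s * c ^ 2 + 2 * s ^ 2 * Var[fun t => t ^ 2; gaussianReal 0 1]) / n)) atTop
      (nhds 0) := by
    simpa using (tendsto_const_div_atTop_nhds_zero_nat 2).add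
      ((tendsto_const_div_atTop_nhds_zero_nat _).sqrt.const_mul (c ^ 2 / s ^ 2))
  rw [← amosRatio_half_sq hs.le, tendsto_iff_norm_sub_tendsto_zero]
  refine squeeze_zero' (.of_forall fun n => norm_nonneg _) ?_ hrate
  filter_upwards [eventually_ne_atTop 0] with n hn
  exact abs_integral_besselRatio_shiftedArg_sq_sub_le hs hc.le hn
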